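/- The quotient VB_4'/VB_4'' (the abelianization of the commutator subgroup VB_4' of VB_4) is isomorphic to (ℤ/3ℤ) ⊕ (ℤ/3ℤ) ⊕ (ℤ/3ℤ). -/

import Mathlib

/-!
Common setup: the virtual braid group `VB n` and the welded braid group `WB n`
as presented groups, together with the distinguished elements of their
commutator subgroups used in the paper
"Commutator subgroups of virtual and welded braid groups".

Generators: for `i : Fin (n-1)`, `Sum.inl i` represents σ_{i+1} and
`Sum.inr i` represents ρ_{i+1}.
-/

/-- The generating set of `VB n` (and `WB n`). -/
abbrev VBGen (n : ℕ) := (Fin (n - 1)) ⊕ (Fin (n - 1))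

/-- The free group letter σ_i, for `1 ≤ i ≤ n-1` (junk value `1` otherwise). -/
def fσ (n i : ℕ) : FreeGroup (VBGen n) :=
  if h : 1 ≤ i ∧ i - 1 < n - 1 then FreeGroup.of (Sum.inl ⟨i - 1, h.2⟩) else 1

/-- The free group letter ρ_i, for `1 ≤ i ≤ n-1` (junk value `1` otherwise). -/
def fρ (n i : ℕ) : FreeGroup (VBGen n) :=
  if h : 1 ≤ i ∧ i - 1 < n - 1 then FreeGroup.of (Sum.inr ⟨i - 1, h.2⟩) else 1

/-- The defining relators of the virtual braid group `VB n`. -/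
def vbRels (n : ℕ) : Set (FreeGroup (VBGen n)) :=
  {r | ∃ i j, 1 ≤ i ∧ i + 2 ≤ j ∧ j ≤ n - 1 ∧
      (r = fσ n i * fσ n j * (fσ n i)⁻¹ * (fσ n j)⁻¹ ∨
       r = fρ n i * fρ n j * (fρ n i)⁻¹ * (fρ n j)⁻¹ ∨
       r = fσ n i * fρ n j * (fσ n i)⁻¹ * (fρ n j)⁻¹ ∨
       r = fσ n j * fρ n i * (fσ n j)⁻¹ * (fρ n i)⁻¹)} ∪
  {r | ∃ i, 1 ≤ i ∧ i + 1 ≤ n - 1 ∧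
      (r = fσ n i * fσ n (i+1) * fσ n i * (fσ n (i+1))⁻¹ * (fσ n i)⁻¹ * (fσ n (i+1))⁻¹ ∨
       r = fρ n i * fρ n (i+1) * fρ n i * (fρ n (i+1))⁻¹ * (fρ n i)⁻¹ * (fρ n (i+1))⁻¹ ∨
       r = fρ n i * fρ n (i+1) * fσ n i * (fρ n (i+1))⁻¹ * (fρ n i)⁻¹ * (fσ n (i+1))⁻¹)} ∪
  {r | ∃ i, 1 ≤ i ∧ i ≤ n - 1 ∧ r = fρ n i * fρ n i}

/-- The virtual braid group on `n` strands. -/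
abbrev VB (n : ℕ) := PresentedGroup (vbRels n)

/-- The generator σ_i of `VB n`. -/
def vσ (n i : ℕ) : VB n := PresentedGroup.mk (vbRels n) (fσ n i)

/-- The generator ρ_i of `VB n`. -/
def vρ (n i : ℕ) : VB n := PresentedGroup.mk (vbRels n) (fρ n i)

/-- a_m = σ_1^m (ρ_1 σ_1 ρ_1 σ_1⁻¹) σ_1^{-m}. -/
def va (n : ℕ) (m : ℤ) : VB n :=
  (vσ n 1) ^ m * (vρ n 1 * vσ n 1 * vρ n 1 * (vσ n 1)⁻¹) * (vσ n 1) ^ (-m)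

/-- b_{m,ε} = σ_1^m (ρ_1^ε σ_2 ρ_1^ε σ_1⁻¹) σ_1^{-m}. -/
def vb (n : ℕ) (m : ℤ) (ε : ℕ) : VB n :=
  (vσ n 1) ^ m * ((vρ n 1) ^ ε * vσ n 2 * (vρ n 1) ^ ε * (vσ n 1)⁻¹) * (vσ n 1) ^ (-m)

/-- c_l = σ_l σ_1⁻¹. -/
def vc (n l : ℕ) : VB n := vσ n l * (vσ n 1)⁻¹

/-- f_{m,ε} = σ_1^m (ρ_1^ε ρ_2 ρ_1^{ε+1}) σ_1^{-m}; `f_m` is `vf n m 0`. -/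
def vf (n : ℕ) (m : ℤ) (ε : ℕ) : VB n :=
  (vσ n 1) ^ m * ((vρ n 1) ^ ε * vρ n 2 * (vρ n 1) ^ (ε + 1)) * (vσ n 1) ^ (-m)

/-- g_{m,l} = σ_1^m (ρ_l ρ_1) σ_1^{-m}. -/
def vg (n : ℕ) (m : ℤ) (l : ℕ) : VB n :=
  (vσ n 1) ^ m * (vρ n l * vρ n 1) * (vσ n 1) ^ (-m)

/-- The additional relators ρ_i σ_{i+1} σ_i (ρ_{i+1})⁻¹ σ_i⁻¹ σ_{i+1}⁻¹ of the
welded braid group. -/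
def wbExtraRels (n : ℕ) : Set (FreeGroup (VBGen n)) :=
  {r | ∃ i, 1 ≤ i ∧ i + 1 ≤ n - 1 ∧
      r = fρ n i * fσ n (i+1) * fσ n i * (fρ n (i+1))⁻¹ * (fσ n i)⁻¹ * (fσ n (i+1))⁻¹}

/-- The defining relators of the welded braid group `WB n`. -/
def wbRels (n : ℕ) : Set (FreeGroup (VBGen n)) := vbRels n ∪ wbExtraRels n

/-- The welded braid group on `n` strands. -/
abbrev WB (n : ℕ) := PresentedGroup (wbRels n)

/-- The generator σ_i of `WB n`. -/
def wσ (n i : ℕ) : WB n := PresentedGroup.mk (wbRels n) (fσ n i)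

/-- The generator ρ_i of `WB n`. -/
def wρ (n i : ℕ) : WB n := PresentedGroup.mk (wbRels n) (fρ n i)

/-- a_m in `WB n`. -/
def wa (n : ℕ) (m : ℤ) : WB n :=
  (wσ n 1) ^ m * (wρ n 1 * wσ n 1 * wρ n 1 * (wσ n 1)⁻¹) * (wσ n 1) ^ (-m)

/-- f_{m,ε} in `WB n`; `f_m` is `wf n m 0`. -/
def wf (n : ℕ) (m : ℤ) (ε : ℕ) : WB n :=
  (wσ n 1) ^ m * ((wρ n 1) ^ ε * wρ n 2 * (wρ n 1) ^ (ε + 1)) * (wσ n 1) ^ (-m)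

/-- c_l in `WB n`. -/
def wc (n l : ℕ) : WB n := wσ n l * (wσ n 1)⁻¹

/-- g_{m,l} in `WB n`. -/
def wg (n : ℕ) (m : ℤ) (l : ℕ) : WB n :=
  (wσ n 1) ^ m * (wρ n l * wρ n 1) * (wσ n 1) ^ (-m)

/-!
Let `M = VB₄ / VB₄''`, so that `M' = VB₄' / VB₄''` is abelian. In `M` the elements `ρ₂ρ₃` and `ρ₂ρ₁`
of `M'` have order dividing `3`, hence so has their quotient `ρ₁ρ₃`, which also squares to `1`; so
`ρ₁ = ρ₃`. Setting `y = ρ₂ρ₃` and `s = σ₁`, the mixed relations become `σ₂ = y⁻¹sy` and `σ₃ = s`.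
Thus `M'` is the normal closure of `y`, and the braid relation between `s` and `y⁻¹sy` is the
recurrence `y₃ = y₂ y₁⁻¹ y₀ y₁⁻¹ y₂` for `yᵢ = sⁱ y s⁻ⁱ`. So `M'` is generated by `y₀`, `y₁`, `y₂`:
it is a quotient of the cyclic module `𝔽₃[t]/((t - 1)(t² - t + 1))`, where `t` acts as conjugation
by `s`. Conversely `VB₄` acts on that ring by affine maps, the `σ`'s having linear part `t` and the
`ρ`'s having linear part `-1`, so that `yᵢ` becomes the translation by `tⁱ`; this shows that there
are no further relations.
-/

open scoped commutatorElement

section BraidRelation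

variable {G : Type*} [Group G] {a b c : G}

lemma mul_eq_commutatorElement_of_braid (ha : a * a = 1) (hb : b * b = 1)
    (hab : a * b * a = b * a * b) : a * b = ⁅b, a⁆ := by
  rw [commutatorElement_def, inv_eq_of_mul_eq_one_left ha, inv_eq_of_mul_eq_one_left hb, ← hab,
    mul_assoc (a * b), ha, mul_one]

lemma mul_mem_commutator_of_braid (ha : a * a = 1) (hb : b * b = 1)
    (hab : a * b * a = b * a * b) : a * b ∈ commutator G := by
  rw [mul_eq_commutatorElement_of_braid ha hb hab]
  exact Subgroup.commutator_mem_commutator (Subgroup.mem_top b) (Subgroup.mem_top a)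

lemma mul_pow_three_of_braid (ha : a * a = 1) (hb : b * b = 1)
    (hab : a * b * a = b * a * b) : (a * b) ^ 3 = 1 := by
  calc (a * b) ^ 3 = (a * b * a) * (b * a * b) := by simp only [pow_three, mul_assoc]
    _ = a * b * (a * a) * b * a := by rw [← hab]; simp only [mul_assoc]
    _ = 1 := by rw [ha, mul_one, mul_assoc a, hb, mul_one, ha]

lemma eq_of_braid_of_commute (ha : a * a = 1) (hb : b * b = 1) (hc : c * c = 1)
    (hab : b * a * b = a * b * a) (hbc : b * c * b = c * b * c) (hac : Commute c a)
    (h : Commute (b * c) (b * a)) : c = a := by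
  have two : (c * a) ^ 2 = 1 := by rw [hac.mul_pow, pow_two, pow_two, ha, hc, one_mul]
  have three : (c * a) ^ 3 = 1 := by
    have quotient : c * a = (b * c)⁻¹ * (b * a) := by
      rw [mul_inv_rev, inv_eq_of_mul_eq_one_left hc]
      group
    rw [quotient, h.inv_left.mul_pow, inv_pow, mul_pow_three_of_braid hb hc hbc,
      mul_pow_three_of_braid hb ha hab, inv_one, one_mul]
  rw [pow_succ, two, one_mul] at three
  rw [eq_inv_of_mul_eq_one_left three, inv_eq_of_mul_eq_one_left ha]

lemma conj_pow_three_eq_of_braid {s y : G}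
    (h : s * (y⁻¹ * s * y) * s = y⁻¹ * s * y * s * (y⁻¹ * s * y)) :
    MulAut.conj (s ^ 3) y = MulAut.conj (s ^ 2) y * (MulAut.conj s y)⁻¹ * y *
      (MulAut.conj s y)⁻¹ * MulAut.conj (s ^ 2) y := by
  simp only [MulAut.conj_apply]
  have left : s * (y⁻¹ * s * y) * s =
      (s * y * s⁻¹)⁻¹ * (s ^ 2 * y * (s ^ 2)⁻¹) * s ^ 3 := by group
  have right : y⁻¹ * s * y * s * (y⁻¹ * s * y) =
      y⁻¹ * (s * y * s⁻¹) * (s ^ 2 * y * (s ^ 2)⁻¹)⁻¹ * (s ^ 3 * y * (s ^ 3)⁻¹) * s ^ 3 := by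
    group
  rw [left, right, mul_left_inj, ← inv_mul_eq_iff_eq_mul] at h
  rw [← h]
  group

end BraidRelation

section ConjugateClosure

open Subgroup

variable {G : Type*} [Group G]

lemma mem_normalizer_closure {S : Set G} {g : G} (h : ∀ x ∈ S, MulAut.conj g x ∈ closure S)
    (h' : ∀ x ∈ S, MulAut.conj g⁻¹ x ∈ closure S) : g ∈ normalizer (closure S : Set G) := by
  have image_le {k : G} (hk : ∀ x ∈ S, MulAut.conj k x ∈ closure S) :
      (closure S).map (MulAut.conj k).toMonoidHom ≤ closure S := by
    rw [MonoidHom.map_closure, closure_le]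
    exact Set.image_subset_iff.2 hk
  rw [mem_normalizer_iff]
  refine fun x => ⟨fun hx => image_le h (mem_map_of_mem _ hx), fun hx => ?_⟩
  simpa [mul_assoc] using image_le h' (mem_map_of_mem _ hx)

variable {s r y : G}

/-- The subgroup generated by `y`, `s y s⁻¹` and `s² y s⁻²`. -/
def conjClosure (s y : G) : Subgroup G :=
  closure (Set.range fun i : Fin 3 => MulAut.conj (s ^ (i : ℕ)) y)

lemma conj_pow_mem_conjClosure {i : ℕ} (hi : i < 3) : MulAut.conj (s ^ i) y ∈ conjClosure s y :=
  subset_closure ⟨⟨i, hi⟩, rfl⟩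

lemma mem_conjClosure : y ∈ conjClosure s y := by
  simpa using conj_pow_mem_conjClosure (s := s) (y := y) (i := 0) (by norm_num)

lemma conj_mem_conjClosure : MulAut.conj s y ∈ conjClosure s y := by
  simpa using conj_pow_mem_conjClosure (s := s) (y := y) (i := 1) (by norm_num)

lemma conj_pow_three_mem_conjClosure
    (h : s * (y⁻¹ * s * y) * s = y⁻¹ * s * y * s * (y⁻¹ * s * y)) :
    MulAut.conj (s ^ 3) y ∈ conjClosure s y := by
  have y₂_mem := conj_pow_mem_conjClosure (s := s) (y := y) (i := 2) (by norm_num)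
  rw [conj_pow_three_eq_of_braid h]
  exact mul_mem (mul_mem (mul_mem (mul_mem y₂_mem (inv_mem conj_mem_conjClosure))
    mem_conjClosure) (inv_mem conj_mem_conjClosure)) y₂_mem

lemma conj_inv_mem_conjClosure
    (h : s * (y⁻¹ * s * y) * s = y⁻¹ * s * y * s * (y⁻¹ * s * y)) :
    MulAut.conj s⁻¹ y ∈ conjClosure s y := by
  have shifted : MulAut.conj s⁻¹ y =
      y * (MulAut.conj s y)⁻¹ * MulAut.conj (s ^ 2) y * (MulAut.conj s y)⁻¹ * y := by
    have h₃ := congrArg (MulAut.conj s⁻¹) (conj_pow_three_eq_of_braid h)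
    simp only [MulAut.conj_apply] at h₃ ⊢
    have solved : s⁻¹ * y * s⁻¹⁻¹ = y * (s * y * s⁻¹)⁻¹ *
        (s⁻¹ * (s ^ 3 * y * (s ^ 3)⁻¹) * s⁻¹⁻¹) * (s * y * s⁻¹)⁻¹ * y := by
      rw [h₃]
      group
    rw [solved]
    group
  rw [shifted]
  exact mul_mem (mul_mem (mul_mem (mul_mem mem_conjClosure (inv_mem conj_mem_conjClosure))
    (conj_pow_mem_conjClosure (by norm_num))) (inv_mem conj_mem_conjClosure)) mem_conjClosure

lemma self_mem_normalizer_conjClosure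
    (h : s * (y⁻¹ * s * y) * s = y⁻¹ * s * y * s * (y⁻¹ * s * y)) :
    s ∈ normalizer (conjClosure s y : Set G) := by
  refine mem_normalizer_closure ?_ ?_ <;> rintro _ ⟨i, rfl⟩ <;>
    rw [← MulAut.mul_apply, ← map_mul]
  · rw [← pow_succ']
    obtain hi | hi : (i : ℕ) + 1 < 3 ∨ (i : ℕ) + 1 = 3 := by omega
    · exact conj_pow_mem_conjClosure hi
    · rw [hi]
      exact conj_pow_three_mem_conjClosure h
  · obtain hi | ⟨j, hj⟩ : (i : ℕ) = 0 ∨ ∃ j, (i : ℕ) = j + 1 := by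
      cases (i : ℕ) <;> simp
    · rw [hi, pow_zero, mul_one]
      exact conj_inv_mem_conjClosure h
    · rw [hj, pow_succ', inv_mul_cancel_left]
      exact conj_pow_mem_conjClosure (by omega)

lemma inverting_mem_normalizer_conjClosure (hsr : Commute s r) (hr : MulAut.conj r y = y⁻¹) :
    r ∈ normalizer (conjClosure s y : Set G) := by
  have hr' : MulAut.conj r⁻¹ y = y⁻¹ := by
    rw [map_inv, MulAut.inv_apply, MulEquiv.symm_apply_eq, map_inv, hr, inv_inv]
  have inverts_conj {k : G} (hk : Commute k s) (hky : MulAut.conj k y = y⁻¹) (i : Fin 3) :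
      MulAut.conj k (MulAut.conj (s ^ (i : ℕ)) y) ∈ conjClosure s y := by
    rw [← MulAut.mul_apply, ← map_mul, (hk.pow_right i).eq, map_mul, MulAut.mul_apply, hky, map_inv]
    exact inv_mem (conj_pow_mem_conjClosure i.2)
  refine mem_normalizer_closure ?_ ?_ <;> rintro _ ⟨i, rfl⟩
  · exact inverts_conj hsr.symm hr i
  · exact inverts_conj hsr.symm.inv_left hr' i

-- Modulo the conjugate closure, which is normal, `G` is generated by the commuting `s` and `r`.
theorem commutator_le_conjClosure (hgen : closure {s, r, y} = (⊤ : Subgroup G))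
    (hsr : Commute s r) (hr : MulAut.conj r y = y⁻¹)
    (h : s * (y⁻¹ * s * y) * s = y⁻¹ * s * y * s * (y⁻¹ * s * y)) :
    commutator G ≤ conjClosure s y := by
  have : (conjClosure s y).Normal := by
    rw [← normalizer_eq_top_iff, eq_top_iff, ← hgen, closure_le]
    rintro _ (rfl | rfl | rfl)
    · exact self_mem_normalizer_conjClosure h
    · exact inverting_mem_normalizer_conjClosure hsr hr
    · exact le_normalizer mem_conjClosure
  have commutative : IsMulCommutative (closure {s, r}) := isMulCommutative_closure <| by
    rintro _ (rfl | rfl) _ (rfl | rfl)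
    exacts [rfl, hsr, hsr.symm, rfl]
  refine Normal.commutator_le_of_self_sup_commutative_eq_top ?_ commutative
  rw [eq_top_iff, ← hgen, closure_le]
  rintro _ (rfl | rfl | rfl)
  · exact mem_sup_right (subset_closure (by simp))
  · exact mem_sup_right (subset_closure (by simp))
  · exact mem_sup_left mem_conjClosure

end ConjugateClosure

/-- The largest metabelian quotient `G ⧸ G''` of a group `G`. -/
abbrev Metabelianization (G : Type*) [Group G] := G ⧸ ⁅commutator G, commutator G⁆

namespace Metabelianization

variable {G : Type*} [Group G]

lemma map_mk_commutator :
    (commutator G).map (QuotientGroup.mk' ⁅commutator G, commutator G⁆) =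
      commutator (Metabelianization G) := by
  rw [map_commutator_eq, MonoidHom.range_eq_top.2 (QuotientGroup.mk'_surjective _)]
  rfl

instance : IsMulCommutative (commutator (Metabelianization G)) := by
  rw [← map_mk_commutator]
  refine .of_setLike_mul_comm ?_
  rintro _ ⟨a, ha, rfl⟩ _ ⟨b, hb, rfl⟩
  rw [← commutatorElement_eq_one_iff_mul_comm, ← map_commutatorElement]
  exact (QuotientGroup.eq_one_iff _).2 (Subgroup.commutator_mem_commutator ha hb)

/-- The identification of `G' ⧸ G''` with the commutator subgroup of `G ⧸ G''`, as a map into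
`G ⧸ G''`. -/
def ofAbelianization : Abelianization (commutator G) →* Metabelianization G :=
  QuotientGroup.map (commutator (commutator G)) ⁅commutator G, commutator G⁆
    (commutator G).subtype (Subgroup.map_le_iff_le_comap.1 (Subgroup.map_subtype_commutator _).le)

lemma ofAbelianization_injective : Function.Injective (ofAbelianization (G := G)) := by
  rw [← MonoidHom.ker_eq_bot_iff]
  refine (QuotientGroup.ker_map _ _ _ _).trans ?_
  rw [← Subgroup.map_subtype_commutator, Subgroup.comap_map_eq_self_of_injective
    (Subgroup.subtype_injective _), QuotientGroup.map_mk'_self]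
  rfl

lemma range_ofAbelianization :
    (ofAbelianization (G := G)).range = commutator (Metabelianization G) := by
  rw [← map_mk_commutator]
  ext x
  constructor
  · rintro ⟨a, rfl⟩
    obtain ⟨g, rfl⟩ := QuotientGroup.mk_surjective a
    exact ⟨g, g.2, rfl⟩
  · rintro ⟨g, hg, rfl⟩
    exact ⟨Abelianization.of ⟨g, hg⟩, rfl⟩

lemma closure_range_of_eq_top {ι : Type*} {v : ι → commutator G}
    (h : commutator (Metabelianization G) ≤
      Subgroup.closure (Set.range fun i => ((v i : G) : Metabelianization G))) :
    Subgroup.closure (Set.range fun i => Abelianization.of (v i)) = ⊤ := by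
  rw [eq_top_iff, ← Subgroup.map_le_map_iff_of_injective ofAbelianization_injective,
    ← MonoidHom.range_eq_map, range_ofAbelianization, MonoidHom.map_closure, ← Set.range_comp]
  exact h

end Metabelianization

/-- The defining relations of the virtual braid group `VB n`, for families `s` and `r` of elements
of a group standing for the `σ`'s and the `ρ`'s. As in `VB n`, only the indices `1, …, n - 1`
matter. -/
structure VBRelations (n : ℕ) {G : Type*} [Group G] (s r : ℕ → G) : Prop where
  commute_σσ {i j : ℕ} : 1 ≤ i → i + 2 ≤ j → j < n → Commute (s i) (s j)
  commute_ρρ {i j : ℕ} : 1 ≤ i → i + 2 ≤ j → j < n → Commute (r i) (r j)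
  commute_σρ {i j : ℕ} : 1 ≤ i → i + 2 ≤ j → j < n → Commute (s i) (r j)
  commute_ρσ {i j : ℕ} : 1 ≤ i → i + 2 ≤ j → j < n → Commute (r i) (s j)
  braid_σ {i : ℕ} : 1 ≤ i → i + 1 < n → s i * s (i + 1) * s i = s (i + 1) * s i * s (i + 1)
  braid_ρ {i : ℕ} : 1 ≤ i → i + 1 < n → r i * r (i + 1) * r i = r (i + 1) * r i * r (i + 1)
  mixed {i : ℕ} : 1 ≤ i → i + 1 < n → r i * r (i + 1) * s i = s (i + 1) * r i * r (i + 1)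
  ρ_mul_self {i : ℕ} : 1 ≤ i → i < n → r i * r i = 1

namespace VBRelations

variable {n : ℕ} {G : Type*} [Group G] {s r : ℕ → G}

lemma map {H : Type*} [Group H] (h : VBRelations n s r) (f : G →* H) :
    VBRelations n (f ∘ s) (f ∘ r) where
  commute_σσ hi hij hj := (h.commute_σσ hi hij hj).map f
  commute_ρρ hi hij hj := (h.commute_ρρ hi hij hj).map f
  commute_σρ hi hij hj := (h.commute_σρ hi hij hj).map f
  commute_ρσ hi hij hj := (h.commute_ρσ hi hij hj).map f
  braid_σ hi hin := by simpa using congrArg f (h.braid_σ hi hin)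
  braid_ρ hi hin := by simpa using congrArg f (h.braid_ρ hi hin)
  mixed hi hin := by simpa using congrArg f (h.mixed hi hin)
  ρ_mul_self hi hin := by simpa using congrArg f (h.ρ_mul_self hi hin)

lemma vσ_vρ (n : ℕ) : VBRelations n (vσ n) (vρ n) where
  commute_σσ {i j} hi hij hj := commutatorElement_eq_one_iff_commute.1 <|
    PresentedGroup.one_of_mem <| .inl <| .inl ⟨i, j, hi, hij, by omega, .inl rfl⟩
  commute_ρρ {i j} hi hij hj := commutatorElement_eq_one_iff_commute.1 <|
    PresentedGroup.one_of_mem <| .inl <| .inl ⟨i, j, hi, hij, by omega, .inr <| .inl rfl⟩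
  commute_σρ {i j} hi hij hj := commutatorElement_eq_one_iff_commute.1 <|
    PresentedGroup.one_of_mem <| .inl <| .inl ⟨i, j, hi, hij, by omega, .inr <| .inr <| .inl rfl⟩
  commute_ρσ {i j} hi hij hj := (commutatorElement_eq_one_iff_commute.1 <|
    PresentedGroup.one_of_mem <| .inl <| .inl
      ⟨i, j, hi, hij, by omega, .inr <| .inr <| .inr rfl⟩).symm
  braid_σ {i} hi hin := PresentedGroup.mk_eq_mk_of_mul_inv_mem <|
    .inl <| .inr ⟨i, hi, by omega, .inl (by group)⟩
  braid_ρ {i} hi hin := PresentedGroup.mk_eq_mk_of_mul_inv_mem <|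
    .inl <| .inr ⟨i, hi, by omega, .inr <| .inl (by group)⟩
  mixed {i} hi hin := PresentedGroup.mk_eq_mk_of_mul_inv_mem <|
    .inl <| .inr ⟨i, hi, by omega, .inr <| .inr (by group)⟩
  ρ_mul_self {i} hi hin := PresentedGroup.one_of_mem <| .inr ⟨i, hi, by omega, rfl⟩

/-- The images of the generators of `VB n` under the homomorphism `σ_i ↦ s i`, `ρ_i ↦ r i`; the
generators of `VB n` are numbered from `0` in `VBGen n`. -/
def genImage (n : ℕ) (s r : ℕ → G) : VBGen n → G :=
  Sum.elim (fun i => s (i + 1)) (fun i => r (i + 1))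

lemma lift_genImage_fσ {i : ℕ} (hi : 1 ≤ i) (hin : i < n) :
    FreeGroup.lift (genImage n s r) (fσ n i) = s i := by
  have h : 1 ≤ i ∧ i - 1 < n - 1 := by omega
  simp [fσ, genImage, h, Nat.sub_add_cancel hi]

lemma lift_genImage_fρ {i : ℕ} (hi : 1 ≤ i) (hin : i < n) :
    FreeGroup.lift (genImage n s r) (fρ n i) = r i := by
  have h : 1 ≤ i ∧ i - 1 < n - 1 := by omega
  simp [fρ, genImage, h, Nat.sub_add_cancel hi]

lemma lift_genImage_eq_one (h : VBRelations n s r) :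
    ∀ w ∈ vbRels n, FreeGroup.lift (genImage n s r) w = 1 := by
  rintro w ((⟨i, j, hi, hij, hj, hw⟩ | ⟨i, hi, hin, hw⟩) | ⟨i, hi, hin, rfl⟩)
  · have hj' : j < n := by omega
    rcases hw with rfl | rfl | rfl | rfl <;>
    simp only [map_mul, map_inv, lift_genImage_fσ hi (by omega : i < n),
      lift_genImage_fρ hi (by omega : i < n), lift_genImage_fσ (by omega : 1 ≤ j) hj',
      lift_genImage_fρ (by omega : 1 ≤ j) hj', mul_inv_eq_iff_eq_mul, one_mul]
    exacts [h.commute_σσ hi hij hj', h.commute_ρρ hi hij hj', h.commute_σρ hi hij hj',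
      (h.commute_ρσ hi hij hj').symm]
  · have hin' : i + 1 < n := by omega
    rcases hw with rfl | rfl | rfl <;>
    simp only [map_mul, map_inv, lift_genImage_fσ hi (by omega : i < n),
      lift_genImage_fρ hi (by omega : i < n), lift_genImage_fσ (by omega : 1 ≤ i + 1) hin',
      lift_genImage_fρ (by omega : 1 ≤ i + 1) hin', mul_inv_eq_iff_eq_mul, one_mul]
    exacts [h.braid_σ hi hin', h.braid_ρ hi hin', h.mixed hi hin']
  · rw [map_mul, lift_genImage_fρ hi (by omega), h.ρ_mul_self hi (by omega)]

/-- The universal property of `VB n`: the homomorphism `σ_i ↦ s i`, `ρ_i ↦ r i`. -/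
def lift (h : VBRelations n s r) : VB n →* G :=
  PresentedGroup.toGroup h.lift_genImage_eq_one

lemma lift_vσ (h : VBRelations n s r) {i : ℕ} (hi : 1 ≤ i) (hin : i < n) :
    h.lift (vσ n i) = s i :=
  lift_genImage_fσ hi hin

lemma lift_vρ (h : VBRelations n s r) {i : ℕ} (hi : 1 ≤ i) (hin : i < n) :
    h.lift (vρ n i) = r i :=
  lift_genImage_fρ hi hin

lemma closure_vσ_vρ (n : ℕ) :
    Subgroup.closure (vσ n '' Set.Ico 1 n ∪ vρ n '' Set.Ico 1 n) = ⊤ := by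
  rw [eq_top_iff, ← PresentedGroup.closure_range_of (vbRels n)]
  refine Subgroup.closure_mono ?_
  rintro _ ⟨i | i, rfl⟩
  · refine .inl ⟨i + 1, ⟨by omega, by omega⟩, ?_⟩
    rw [vσ, fσ, dif_pos ⟨by omega, i.2⟩]
    rfl
  · refine .inr ⟨i + 1, ⟨by omega, by omega⟩, ?_⟩
    rw [vρ, fρ, dif_pos ⟨by omega, i.2⟩]
    rfl

lemma ρ_two_mul_ρ_three_mem_commutator (h : VBRelations 4 s r) : r 2 * r 3 ∈ commutator G :=
  mul_mem_commutator_of_braid (h.ρ_mul_self (by norm_num) (by norm_num))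
    (h.ρ_mul_self (by norm_num) (by norm_num)) (h.braid_ρ (i := 2) (by norm_num) (by norm_num))

lemma ρ_two_mul_ρ_three_pow_three (h : VBRelations 4 s r) : (r 2 * r 3) ^ 3 = 1 :=
  mul_pow_three_of_braid (h.ρ_mul_self (by norm_num) (by norm_num))
    (h.ρ_mul_self (by norm_num) (by norm_num)) (h.braid_ρ (i := 2) (by norm_num) (by norm_num))

section Metabelian

variable [IsMulCommutative (commutator G)]

lemma ρ_one_eq_ρ_three (h : VBRelations 4 s r) : r 1 = r 3 := by
  have ρ₁ := h.ρ_mul_self (i := 1) (by norm_num) (by norm_num)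
  have ρ₂ := h.ρ_mul_self (i := 2) (by norm_num) (by norm_num)
  have ρ₃ := h.ρ_mul_self (i := 3) (by norm_num) (by norm_num)
  have braid₁₂ := h.braid_ρ (i := 1) (by norm_num) (by norm_num)
  have braid₂₃ := h.braid_ρ (i := 2) (by norm_num) (by norm_num)
  refine eq_of_braid_of_commute ρ₃ ρ₂ ρ₁ braid₂₃ braid₁₂.symm
    (h.commute_ρρ (by norm_num) (by norm_num) (by norm_num)) ?_
  exact setLike_mul_comm (s := commutator G)
    (mul_mem_commutator_of_braid ρ₂ ρ₁ braid₁₂.symm) h.ρ_two_mul_ρ_three_mem_commutator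

lemma inv_ρ_two_mul_ρ_three (h : VBRelations 4 s r) : (r 2 * r 3)⁻¹ = r 1 * r 2 := by
  rw [mul_inv_rev, h.ρ_one_eq_ρ_three,
    inv_eq_of_mul_eq_one_left (h.ρ_mul_self (i := 2) (by norm_num) (by norm_num)),
    inv_eq_of_mul_eq_one_left (h.ρ_mul_self (i := 3) (by norm_num) (by norm_num))]

lemma σ_two_eq_conj (h : VBRelations 4 s r) : s 2 = (r 2 * r 3)⁻¹ * s 1 * (r 2 * r 3) := by
  have mixed := h.mixed (i := 1) (by norm_num) (by norm_num)
  rw [mul_assoc (s 2), ← h.inv_ρ_two_mul_ρ_three] at mixed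
  rw [mixed, inv_mul_cancel_right]

lemma σ_three_eq_σ_one (h : VBRelations 4 s r) : s 3 = s 1 := by
  have mixed : r 2 * r 3 * s 2 = s 3 * (r 2 * r 3) :=
    (h.mixed (by norm_num) (by norm_num)).trans (mul_assoc _ _ _)
  rw [h.σ_two_eq_conj, mul_assoc _⁻¹, mul_inv_cancel_left] at mixed
  exact (mul_right_cancel mixed).symm

theorem commutator_le_conjClosure (h : VBRelations 4 s r)
    (hgen : Subgroup.closure (s '' Set.Ico 1 4 ∪ r '' Set.Ico 1 4) = ⊤) :
    commutator G ≤ conjClosure (s 1) (r 2 * r 3) := by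
  refine _root_.commutator_le_conjClosure (r := r 3) ?_
    (h.commute_σρ (by norm_num) (by norm_num) (by norm_num)) ?_ ?_
  · set K := Subgroup.closure {s 1, r 3, r 2 * r 3}
    have s₁ : s 1 ∈ K := Subgroup.subset_closure (by simp)
    have r₃ : r 3 ∈ K := Subgroup.subset_closure (by simp)
    have y : r 2 * r 3 ∈ K := Subgroup.subset_closure (by simp)
    rw [eq_top_iff, ← hgen, Subgroup.closure_le]
    rintro _ (⟨i, ⟨hi, hi'⟩, rfl⟩ | ⟨i, ⟨hi, hi'⟩, rfl⟩) <;> interval_cases i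
    · exact s₁
    · rw [h.σ_two_eq_conj]
      exact mul_mem (mul_mem (inv_mem y) s₁) y
    · rwa [h.σ_three_eq_σ_one]
    · rwa [h.ρ_one_eq_ρ_three]
    · exact (Subgroup.mul_mem_cancel_right K r₃).1 y
    · exact r₃
  · rw [h.inv_ρ_two_mul_ρ_three, h.ρ_one_eq_ρ_three, MulAut.conj_apply, ← mul_assoc,
      mul_inv_cancel_right]
  · rw [← h.σ_two_eq_conj]
    exact h.braid_σ (i := 1) (by norm_num) (by norm_num)

end Metabelian

end VBRelations

section ElementaryAbelian

variable {n : ℕ} {ι A V : Type*} [AddCommGroup A] [AddCommGroup V] [Module (ZMod n) V]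

theorem bijective_of_forall_eq_basis (b : Module.Basis ι (ZMod n) V) {v : ι → A}
    (hv : AddSubgroup.closure (Set.range v) = ⊤) (hvn : ∀ i, n • v i = 0)
    (f : A →+ V) (hf : ∀ i, f (v i) = b i) : Function.Bijective f := by
  have exponent : nsmulAddMonoidHom n = (0 : A →+ A) :=
    AddMonoidHom.eq_of_eqOn_dense hv (by rintro _ ⟨i, rfl⟩; exact hvn i)
  let : Module (ZMod n) A := AddCommGroup.zmodModule (DFunLike.congr_fun exponent)
  let g : V →+ A := (b.constr (ZMod n) v).toAddMonoidHom
  have g_apply (i : ι) : g (b i) = v i := b.constr_basis (ZMod n) v i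
  have left_inv : g.comp f = AddMonoidHom.id A := AddMonoidHom.eq_of_eqOn_dense hv <| by
    rintro _ ⟨i, rfl⟩
    rw [AddMonoidHom.comp_apply, hf, g_apply, AddMonoidHom.id_apply]
  have right_inv : (f.comp g).toZModLinearMap n = LinearMap.id := b.ext fun i => by
    rw [AddMonoidHom.coe_toZModLinearMap, AddMonoidHom.comp_apply, g_apply, hf, LinearMap.id_apply]
  have left : Function.LeftInverse g f := DFunLike.congr_fun left_inv
  have right : Function.RightInverse g f := LinearMap.congr_fun right_inv
  exact ⟨left.injective, right.surjective⟩

end ElementaryAbelian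

section TranslationPart

variable {G N A : Type*} [Group G] [Group N] [CommGroup A] {φ : A →* MulAut N}

lemma right_eq_one_of_mem_commutator (f : G →* N ⋊[φ] A) {g : G} (hg : g ∈ commutator G) :
    (f g).right = 1 :=
  Abelianization.commutator_subset_ker (SemidirectProduct.rightHom.comp f) hg

/-- A homomorphism from `G` to a semidirect product of `N` by a commutative group sends `G'` into
`N`; this is the induced homomorphism. -/
def translationPart (f : G →* N ⋊[φ] A) : commutator G →* N where
  toFun g := (f g).left
  map_one' := by simp
  map_mul' g h := by
    rw [Subgroup.coe_mul, map_mul, SemidirectProduct.mul_left,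
      right_eq_one_of_mem_commutator f g.2, map_one, MulAut.one_apply]

end TranslationPart

/-- The group of affine maps `x ↦ u * x + v` of a commutative ring `R`, with `u` a unit. -/
abbrev AffineGroup (R : Type*) [CommRing R] :=
  Multiplicative R ⋊[(MulAutMultiplicative R).symm.toMonoidHom.comp
    (DistribMulAction.toAddAut Rˣ R)] Rˣ

namespace AffineGroup

variable {R : Type*} [CommRing R]

/-- The affine map `x ↦ u * x + v`. -/
def mk (v : R) (u : Rˣ) : AffineGroup R := ⟨.ofAdd v, u⟩

lemma mk_mul_mk (v w : R) (u z : Rˣ) : mk v u * mk w z = mk (v + u * w) (u * z) := rfl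

lemma one_eq_mk : (1 : AffineGroup R) = mk 0 1 := rfl

lemma conj_pow_mk_one (u : Rˣ) (v : R) (i : ℕ) :
    MulAut.conj (mk 0 u ^ i) (mk v 1) = mk ((u : R) ^ i * v) 1 := by
  induction i with
  | zero => simp
  | succ i ih =>
    rw [pow_succ', map_mul, MulAut.mul_apply, ih, MulAut.conj_apply, mul_inv_eq_iff_eq_mul,
      mk_mul_mk, mk_mul_mk, mul_one, one_mul, mul_zero, add_zero, zero_add, pow_succ', mul_assoc]

lemma braid_mk_mk {v w : R} {u : Rˣ} (h : (v - w) * ((u : R) ^ 2 - u + 1) = 0) :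
    mk v u * mk w u * mk v u = mk w u * mk v u * mk w u := by
  simp only [mk_mul_mk, Units.val_mul]
  congr 1
  linear_combination h

lemma mixed_mk_mk {v w x y : R} {u : Rˣ} (h : w - v = (y - x) * (u - 1)) :
    mk x (-1) * mk y (-1) * mk v u = mk w u * mk x (-1) * mk y (-1) := by
  rw [mk_mul_mk, mk_mul_mk, mk_mul_mk, mk_mul_mk, mul_right_comm, mul_comm u]
  congr 1
  push_cast
  linear_combination -h

-- The translation parts are chosen so that `ρ₂ρ₃` is the translation by `1` and
-- `σ₂ = (ρ₂ρ₃)⁻¹ σ₁ (ρ₂ρ₃)`.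
theorem vbRelations (three : (3 : R) = 0) {t : Rˣ}
    (ht : ((t : R) - 1) * ((t : R) ^ 2 - t + 1) = 0) :
    VBRelations 4 (fun i => mk (if i = 2 then (t : R) - 1 else 0) t)
      (fun i => mk (if i = 2 then 1 else 0) (-1)) where
  commute_σσ {i j} hi hij hj := by
    obtain ⟨rfl, rfl⟩ : i = 1 ∧ j = 3 := by omega
    exact .refl _
  commute_ρρ {i j} hi hij hj := by
    obtain ⟨rfl, rfl⟩ : i = 1 ∧ j = 3 := by omega
    exact .refl _
  commute_σρ {i j} hi hij hj := by
    obtain ⟨rfl, rfl⟩ : i = 1 ∧ j = 3 := by omega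
    simp [Commute, SemiconjBy, mk_mul_mk]
  commute_ρσ {i j} hi hij hj := by
    obtain ⟨rfl, rfl⟩ : i = 1 ∧ j = 3 := by omega
    simp [Commute, SemiconjBy, mk_mul_mk]
  braid_σ {i} hi hin := by
    obtain rfl | rfl : i = 1 ∨ i = 2 := by omega
    · exact (braid_mk_mk (by simpa using ht)).symm
    · exact braid_mk_mk (by simpa using ht)
  braid_ρ _ _ := by
    have cyclotomic : ((-1 : Rˣ) : R) ^ 2 - (-1 : Rˣ) + 1 = 0 := by
      rw [Units.val_neg, Units.val_one]
      linear_combination three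
    exact braid_mk_mk (by rw [cyclotomic, mul_zero])
  mixed {i} hi hin := by
    obtain rfl | rfl : i = 1 ∨ i = 2 := by omega
    · exact mixed_mk_mk (by simp)
    · exact mixed_mk_mk (by simp)
  ρ_mul_self _ _ := by
    rw [mk_mul_mk, one_eq_mk, neg_mul_neg, one_mul, Units.val_neg, Units.val_one, neg_one_mul,
      add_neg_cancel]

end AffineGroup

/-- The conjugates by powers of `σ₁` of the element `ρ₂ρ₃` of the commutator subgroup of `VB₄`. -/
def conjRho (i : ℕ) : commutator (VB 4) :=
  MulAut.conjNormal (vσ 4 1 ^ i)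
    ⟨vρ 4 2 * vρ 4 3, (VBRelations.vσ_vρ 4).ρ_two_mul_ρ_three_mem_commutator⟩

lemma coe_conjRho (i : ℕ) :
    (conjRho i : VB 4) = MulAut.conj (vσ 4 1 ^ i) (vρ 4 2 * vρ 4 3) :=
  MulAut.conjNormal_apply _ _

lemma conjRho_pow_three (i : ℕ) : conjRho i ^ 3 = 1 := by
  apply Subtype.ext
  rw [SubmonoidClass.coe_pow, coe_conjRho, ← map_pow,
    (VBRelations.vσ_vρ 4).ρ_two_mul_ρ_three_pow_three, map_one, OneMemClass.coe_one]

lemma closure_range_conjRho :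
    Subgroup.closure (Set.range fun i : Fin 3 => Abelianization.of (conjRho i)) = ⊤ := by
  let π := QuotientGroup.mk' ⁅commutator (VB 4), commutator (VB 4)⁆
  have rels := (VBRelations.vσ_vρ 4).map π
  have gen := congrArg (Subgroup.map π) (VBRelations.closure_vσ_vρ 4)
  rw [MonoidHom.map_closure, Set.image_union, ← Set.image_comp, ← Set.image_comp,
    Subgroup.map_top_of_surjective π (QuotientGroup.mk'_surjective _)] at gen
  exact Metabelianization.closure_range_of_eq_top (rels.commutator_le_conjClosure gen)

lemma AffineGroup.lift_conjRho {R : Type*} [CommRing R] (three : (3 : R) = 0) {t : Rˣ}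
    (ht : ((t : R) - 1) * ((t : R) ^ 2 - t + 1) = 0) (i : ℕ) :
    (vbRelations three ht).lift (conjRho i) = mk ((t : R) ^ i) 1 := by
  let f := (vbRelations three ht).lift
  have map_σ₁ : f (vσ 4 1) = mk 0 t := VBRelations.lift_vσ _ (by norm_num) (by norm_num)
  have map_ρ₂ : f (vρ 4 2) = mk 1 (-1) := VBRelations.lift_vρ _ (by norm_num) (by norm_num)
  have map_ρ₃ : f (vρ 4 3) = mk 0 (-1) := VBRelations.lift_vρ _ (by norm_num) (by norm_num)
  have map_ρ₂ρ₃ : f (vρ 4 2 * vρ 4 3) = mk 1 1 := by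
    rw [map_mul, map_ρ₂, map_ρ₃, mk_mul_mk, mul_zero, add_zero, neg_mul_neg, one_mul]
  calc f (conjRho i)
      = MulAut.conj (f (vσ 4 1) ^ i) (f (vρ 4 2 * vρ 4 3)) := by
        rw [coe_conjRho, MulAut.conj_apply, MulAut.conj_apply, map_mul, map_mul, map_inv, map_pow]
    _ = mk ((t : R) ^ i) 1 := by rw [map_σ₁, map_ρ₂ρ₃, conj_pow_mk_one, mul_one]

section ConjPoly

open Polynomial

/-- The polynomial `(X - 1)(X² - X + 1)` over `𝔽₃`, which is the characteristic polynomial of the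
action of `σ₁` on the abelianization of the commutator subgroup of `VB₄`. -/
noncomputable def conjPoly : (ZMod 3)[X] := (X - 1) * (X ^ 2 - X + 1)

lemma natDegree_conjPoly : conjPoly.natDegree = 3 := by
  unfold conjPoly
  compute_degree!

lemma monic_conjPoly : conjPoly.Monic := by
  unfold conjPoly
  monicity!

lemma three_eq_zero_of_algebra_zmod (R : Type*) [Ring R] [Algebra (ZMod 3) R] : (3 : R) = 0 := by
  have h := congrArg (algebraMap (ZMod 3) R) (show (3 : ZMod 3) = 0 from rfl)
  rwa [map_ofNat, map_zero] at h

lemma root_conjPoly :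
    (AdjoinRoot.root conjPoly - 1) * (AdjoinRoot.root conjPoly ^ 2 - AdjoinRoot.root conjPoly + 1) =
      0 := by
  have h : AdjoinRoot.mk conjPoly ((X - 1) * (X ^ 2 - X + 1)) = 0 := AdjoinRoot.mk_self
  simpa only [map_mul, map_add, map_sub, map_pow, map_one, AdjoinRoot.mk_X] using h

/-- The root of `conjPoly` as a unit of `AdjoinRoot conjPoly`. -/
noncomputable def rootUnit : (AdjoinRoot conjPoly)ˣ :=
  .mkOfMulEqOne (AdjoinRoot.root conjPoly)
    (AdjoinRoot.root conjPoly ^ 2 - 2 * AdjoinRoot.root conjPoly + 2)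
    (by linear_combination root_conjPoly)

end ConjPoly

/-- The map `VB₄' ⧸ VB₄'' → 𝔽₃[t] ⧸ conjPoly` given by the translation parts of the affine action
in which `σ₁` has linear part `t`. -/
noncomputable def abelianizationHom :
    Abelianization (commutator (VB 4)) →* Multiplicative (AdjoinRoot conjPoly) :=
  Abelianization.lift <| translationPart <|
    (AffineGroup.vbRelations (t := rootUnit) (three_eq_zero_of_algebra_zmod _) root_conjPoly).lift

lemma abelianizationHom_conjRho (i : ℕ) :
    abelianizationHom (.of (conjRho i)) = .ofAdd (AdjoinRoot.root conjPoly ^ i) :=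
  congrArg SemidirectProduct.left <|
    AffineGroup.lift_conjRho (three_eq_zero_of_algebra_zmod _) root_conjPoly i

theorem abelianizationHom_bijective : Function.Bijective abelianizationHom := by
  let powers := AdjoinRoot.powerBasis' monic_conjPoly
  let b := powers.basis.reindex (finCongr natDegree_conjPoly)
  refine bijective_of_forall_eq_basis b (v := fun i => .ofMul (.of (conjRho i))) ?_ ?_
    (MonoidHom.toAdditiveLeft abelianizationHom) ?_
  · have dense := congrArg Subgroup.toAddSubgroup closure_range_conjRho
    rw [Subgroup.toAddSubgroup_closure] at dense
    exact dense
  · exact fun i => congrArg (Additive.ofMul ∘ Abelianization.of) (conjRho_pow_three i)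
  · intro i
    rw [Module.Basis.reindex_apply, PowerBasis.basis_eq_pow]
    exact congrArg Multiplicative.toAdd (abelianizationHom_conjRho i)

/-- `VB_4'/VB_4'' ≅ ℤ/3 ⊕ ℤ/3 ⊕ ℤ/3`. -/
theorem VB4_commutator_abelianization :
    Nonempty (Abelianization ↥(commutator (VB 4)) ≃*
      Multiplicative (ZMod 3 × ZMod 3 × ZMod 3)) := by
  have : Module.Finite (ZMod 3) (AdjoinRoot conjPoly) := monic_conjPoly.finite_adjoinRoot
  have finrank_eq : Module.finrank (ZMod 3) (AdjoinRoot conjPoly) =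
      Module.finrank (ZMod 3) (ZMod 3 × ZMod 3 × ZMod 3) := by
    rw [(AdjoinRoot.powerBasis' monic_conjPoly).finrank, AdjoinRoot.powerBasis'_dim,
      natDegree_conjPoly]
    simp
  let e := LinearEquiv.ofFinrankEq _ _ finrank_eq
  exact ⟨(MulEquiv.ofBijective _ abelianizationHom_bijective).trans e.toAddEquiv.toMultiplicative⟩
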